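/- arXiv:1706.09162 — 6 statements merged into one kernel-verified Lean document; each statement's English description precedes it below -/
import Mathlib

section
/- Let V be a real inner product space of finite dimension n, let ξ ∈ V with ⟪ξ, ξ⟫ = 1, and set η(X) := ⟪X, ξ⟫. Let R, R̃ : V → V → V → V be ℝ-trilinear maps related by R̃(X,Y)Z = R(X,Y)Z − 3(⟪Y,Z⟫ X − ⟪X,Z⟫ Y) + 2(η(Y)η(Z) X − η(X)η(Z) Y) + 2(⟪Y,Z⟫ η(X) − ⟪X,Z⟫ η(Y)) ξ for all X, Y, Z ∈ V. Define S(Y,Z) := trace of (X ↦ R(X,Y)Z) and S̃(Y,Z) := trace of (X ↦ R̃(X,Y)Z). Then S̃(Y, Z) = S(Y, Z) − (3n − 5) ⟪Y, Z⟫ + 2(n − 2) η(Y) η(Z) for all Y, Z ∈ V. -/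
open RealInnerProductSpace

/-!
For fixed `Y` and `Z`, the endomorphism `X ↦ Rt X Y Z` differs from `X ↦ R X Y Z` by a linear
combination of the identity, of trace `n`, and of rank-one maps `X ↦ ⟪w, X⟫ • v`, of trace `⟪w, v⟫`
(`LinearMap.trace_smulRight`). Taking traces and using `⟪ξ, ξ⟫ = 1`, the correction is
`-3 (n - 1) ⟪Y, Z⟫ + 2 (n - 1) η Y η Z + 2 (⟪Y, Z⟫ - η Y η Z)`.
-/

/-- Ricci tensor relation (2.8a) for the semisymmetric metric connection on an
`n`-dimensional Kenmotsu manifold: if `R̃` is related to `R` by (2.7a), then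
`S̃ Y Z = S Y Z - (3n - 5) ⟪Y, Z⟫ + 2 (n - 2) η Y η Z`. -/
theorem stmt_5 {V : Type*} [NormedAddCommGroup V] [InnerProductSpace ℝ V]
    [FiniteDimensional ℝ V] (n : ℕ) (hdim : Module.finrank ℝ V = n)
    (ξ : V) (hξ : ⟪ξ, ξ⟫ = 1) (η : V → ℝ) (hη : ∀ X, η X = ⟪X, ξ⟫)
    (R Rt : V →ₗ[ℝ] V →ₗ[ℝ] V →ₗ[ℝ] V)
    (hRt : ∀ X Y Z : V,
      Rt X Y Z = R X Y Z - 3 • (⟪Y, Z⟫ • X - ⟪X, Z⟫ • Y)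
        + 2 • ((η Y * η Z) • X - (η X * η Z) • Y)
        + 2 • ((⟪Y, Z⟫ * η X - ⟪X, Z⟫ * η Y) • ξ))
    (S St : V → V → ℝ)
    (hS : ∀ Y Z : V, S Y Z = LinearMap.trace ℝ V ((R.flip Y).flip Z))
    (hSt : ∀ Y Z : V, St Y Z = LinearMap.trace ℝ V ((Rt.flip Y).flip Z)) :
    ∀ Y Z : V,
      St Y Z = S Y Z - (3 * (n : ℝ) - 5) * ⟪Y, Z⟫ + 2 * ((n : ℝ) - 2) * (η Y * η Z) := by
  intro Y Z
  -- The relation between `Rt` and `R` as an identity of endomorphisms in the slot being traced: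
  -- the correction is a combination of the identity and of rank-one maps `X ↦ ⟪w, X⟫ • v`.
  have key : (Rt.flip Y).flip Z = (R.flip Y).flip Z
      - (3 : ℝ) • (⟪Y, Z⟫ • LinearMap.id - (innerₗ V Z).smulRight Y)
      + (2 : ℝ) • ((η Y * η Z) • LinearMap.id - η Z • (innerₗ V ξ).smulRight Y)
      + (2 : ℝ) • (⟪Y, Z⟫ • (innerₗ V ξ).smulRight ξ - η Y • (innerₗ V Z).smulRight ξ) := by
    ext X
    simp only [LinearMap.flip_apply, hRt, LinearMap.add_apply, LinearMap.sub_apply,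
      LinearMap.smul_apply, LinearMap.smulRight_apply, LinearMap.id_apply, innerₗ_apply_apply, hη,
      real_inner_comm X]
    module
  rw [hSt, hS, key]
  simp only [map_add, map_sub, map_smul, LinearMap.trace_id, LinearMap.trace_smulRight,
    innerₗ_apply_apply, smul_eq_mul, hdim, hξ, hη, real_inner_comm Y]
  ring
end

section
/- Let V be a real inner product space, let ξ ∈ V with ⟪ξ, ξ⟫ = 1, and set η(X) := ⟪X, ξ⟫. Let W be a real vector space and h : V → V → W a symmetric ℝ-bilinear map satisfying h(X, ξ) = 0 for all X ∈ V. Let R : V → V → V → V be an ℝ-trilinear map with R(X, Y)ξ = η(X) Y − η(Y) X for all X, Y ∈ V, let P : V → V → (W →ₗ W) be an ℝ-bilinear map into linear endomorphisms of W, and let L ∈ ℝ with L ≠ 1. If for all X, Y, Z, U ∈ V: P(X,Y)(h(Z,U)) − h(R(X,Y)Z, U) − h(Z, R(X,Y)U) = L·(⟪Y,Z⟫ h(X,U) − ⟪X,Z⟫ h(Y,U) + ⟪Y,U⟫ h(X,Z) − ⟪X,U⟫ h(Y,Z)), then h = 0. -/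
open RealInnerProductSpace

/-- Algebraic core of Theorem 3.2: a Deszcz pseudo parallel second fundamental form
with `L ≠ 1` on a contact CR-submanifold of a Kenmotsu manifold vanishes. -/
theorem stmt_8 {V W : Type*} [NormedAddCommGroup V] [InnerProductSpace ℝ V]
    [AddCommGroup W] [Module ℝ W]
    (ξ : V) (hξ : ⟪ξ, ξ⟫ = 1) (η : V → ℝ) (hη : ∀ X, η X = ⟪X, ξ⟫)
    (h : V →ₗ[ℝ] V →ₗ[ℝ] W) (hsymm : ∀ X Y : V, h X Y = h Y X)
    (hhξ : ∀ X : V, h X ξ = 0)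
    (R : V →ₗ[ℝ] V →ₗ[ℝ] V →ₗ[ℝ] V)
    (hRξ : ∀ X Y : V, R X Y ξ = η X • Y - η Y • X)
    (P : V →ₗ[ℝ] V →ₗ[ℝ] W →ₗ[ℝ] W)
    (L : ℝ) (hL : L ≠ 1)
    (hyp : ∀ X Y Z U : V,
      P X Y (h Z U) - h (R X Y Z) U - h Z (R X Y U)
        = L • (⟪Y, Z⟫ • h X U - ⟪X, Z⟫ • h Y U + ⟪Y, U⟫ • h X Z
            - ⟪X, U⟫ • h Y Z)) :
    h = 0 := by
  have hξh : ∀ X : V, h ξ X = 0 := fun X => by rw [hsymm, hhξ]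
  ext X Z
  -- With `Y = U = ξ` the condition collapses to `h(Z, X) = L h(X, Z)`.
  have key := hyp X ξ Z ξ
  simp only [hRξ, hη, hξ, hhξ, hξh, map_sub, map_smul, map_zero, smul_zero, one_smul,
    zero_sub, sub_zero, neg_neg, zero_add] at key
  rw [hsymm Z X] at key
  have hzero : (1 - L) • h X Z = 0 := by
    rw [sub_smul, one_smul, ← key, sub_self]
  exact (smul_eq_zero.mp hzero).resolve_left (sub_ne_zero.mpr hL.symm)
end

section
/- Let V be a real inner product space, let ξ ∈ V with ⟪ξ, ξ⟫ = 1, and set η(X) := ⟪X, ξ⟫. Let W be a real vector space and h : V → V → W a symmetric ℝ-bilinear map satisfying h(X, ξ) = 0 for all X ∈ V. Let R : V → V → V → V be an ℝ-trilinear map with R(X, Y)ξ = η(X) Y − η(Y) X for all X, Y ∈ V, and let P : V → V → (W →ₗ W) be an ℝ-bilinear map into linear endomorphisms of W. If for all X, Y, Z, U ∈ V: P(X,Y)(h(Z,U)) − h(R(X,Y)Z, U) − h(Z, R(X,Y)U) = 0, then h = 0. -/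
open RealInnerProductSpace

/-- Algebraic core of Corollary 3.2: a semiparallel second fundamental form
on a contact CR-submanifold of a Kenmotsu manifold vanishes. -/
theorem stmt_9 {V W : Type*} [NormedAddCommGroup V] [InnerProductSpace ℝ V]
    [AddCommGroup W] [Module ℝ W]
    (ξ : V) (hξ : ⟪ξ, ξ⟫ = 1) (η : V → ℝ) (hη : ∀ X, η X = ⟪X, ξ⟫)
    (h : V →ₗ[ℝ] V →ₗ[ℝ] W) (hsymm : ∀ X Y : V, h X Y = h Y X)
    (hhξ : ∀ X : V, h X ξ = 0)
    (R : V →ₗ[ℝ] V →ₗ[ℝ] V →ₗ[ℝ] V)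
    (hRξ : ∀ X Y : V, R X Y ξ = η X • Y - η Y • X)
    (P : V →ₗ[ℝ] V →ₗ[ℝ] W →ₗ[ℝ] W)
    (hyp : ∀ X Y Z U : V,
      P X Y (h Z U) - h (R X Y Z) U - h Z (R X Y U) = 0) :
    h = 0 := by
  ext Z Y
  -- With `X = U = ξ` only `h Z (R ξ Y ξ) = h Z (Y - η Y • ξ) = h Z Y` survives.
  have key := hyp ξ Y Z ξ
  have hη1 : η ξ = 1 := (hη ξ).trans hξ
  simpa [hhξ, hRξ, hη1] using key
end

section
/- Let V be a real inner product space, let ξ ∈ V with ⟪ξ, ξ⟫ = 1, and set η(X) := ⟪X, ξ⟫. Let W be a real vector space and h : V → V → W a symmetric ℝ-bilinear map satisfying h(X, ξ) = 0 for all X ∈ V. Let R̃ : V → V → V → V be an ℝ-trilinear map with R̃(X, Y)ξ = 2(η(X) Y − η(Y) X) for all X, Y ∈ V, let P : V → V → (W →ₗ W) be an ℝ-bilinear map into linear endomorphisms of W, and let L ∈ ℝ with L ≠ 2. If for all X, Y, Z, U ∈ V: P(X,Y)(h(Z,U)) − h(R̃(X,Y)Z, U) − h(Z, R̃(X,Y)U)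 = L·(⟪Y,Z⟫ h(X,U) − ⟪X,Z⟫ h(Y,U) + ⟪Y,U⟫ h(X,Z) − ⟪X,U⟫ h(Y,Z)), then h = 0. -/
open RealInnerProductSpace

/-- Algebraic core of Theorem 4.3: a second fundamental form that is Deszcz pseudo
parallel with `L ≠ 2` with respect to the semisymmetric metric connection (whose
curvature satisfies `R̃ (X, Y) ξ = 2 (η X • Y - η Y • X)`) vanishes. -/
theorem stmt_12 {V W : Type*} [NormedAddCommGroup V] [InnerProductSpace ℝ V]
    [AddCommGroup W] [Module ℝ W]
    (ξ : V) (hξ : ⟪ξ, ξ⟫ = 1) (η : V → ℝ) (hη : ∀ X, η X = ⟪X, ξ⟫)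
    (h : V →ₗ[ℝ] V →ₗ[ℝ] W) (hsymm : ∀ X Y : V, h X Y = h Y X)
    (hhξ : ∀ X : V, h X ξ = 0)
    (Rt : V →ₗ[ℝ] V →ₗ[ℝ] V →ₗ[ℝ] V)
    (hRtξ : ∀ X Y : V, Rt X Y ξ = 2 • (η X • Y - η Y • X))
    (P : V →ₗ[ℝ] V →ₗ[ℝ] W →ₗ[ℝ] W)
    (L : ℝ) (hL : L ≠ 2)
    (hyp : ∀ X Y Z U : V,
      P X Y (h Z U) - h (Rt X Y Z) U - h Z (Rt X Y U)
        = L • (⟪Y, Z⟫ • h X U - ⟪X, Z⟫ • h Y U + ⟪Y, U⟫ • h X Z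
            - ⟪X, U⟫ • h Y Z)) :
    h = 0 := by
  have hξh : ∀ X : V, h ξ X = 0 := fun X => by rw [hsymm, hhξ]
  ext X Z
  -- With `Y = U = ξ` the condition collapses to `2 • h Z X = L • h X Z`.
  have key := hyp X ξ Z ξ
  rw [hRtξ] at key
  simp only [hη, hξ, hhξ, hξh, map_sub, map_smul, map_nsmul, map_zero, smul_zero, one_smul,
    sub_zero, zero_sub, zero_add, smul_neg, neg_neg, hsymm Z X] at key
  have hz : (L - 2) • h X Z = 0 := by
    rw [sub_smul, ← key, two_nsmul, two_smul ℝ, sub_self]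
  simpa using (smul_eq_zero.mp hz).resolve_left (sub_ne_zero.mpr hL)
end

section
/- Let V be a real inner product space, let ξ ∈ V with ⟪ξ, ξ⟫ = 1, and set η(X) := ⟪X, ξ⟫. Let W be a real vector space and h : V → V → W a symmetric ℝ-bilinear map satisfying h(X, ξ) = 0 for all X ∈ V. Let R̃ : V → V → V → V be an ℝ-trilinear map with R̃(X, Y)ξ = 2(η(X) Y − η(Y) X) for all X, Y ∈ V, and let P : V → V → (W →ₗ W) be an ℝ-bilinear map into linear endomorphisms of W. If for all X, Y, Z, U ∈ V: P(X,Y)(h(Z,U)) − h(R̃(X,Y)Z, U) − h(Z, R̃(X,Y)U) = 0, then h = 0. -/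
open RealInnerProductSpace

/-- Algebraic core of Corollary 4.2: a second fundamental form that is semiparallel
with respect to the semisymmetric metric connection (whose curvature satisfies
`R̃ (X, Y) ξ = 2 (η X • Y - η Y • X)`) vanishes. -/
theorem stmt_13 {V W : Type*} [NormedAddCommGroup V] [InnerProductSpace ℝ V]
    [AddCommGroup W] [Module ℝ W]
    (ξ : V) (hξ : ⟪ξ, ξ⟫ = 1) (η : V → ℝ) (hη : ∀ X, η X = ⟪X, ξ⟫)
    (h : V →ₗ[ℝ] V →ₗ[ℝ] W) (hsymm : ∀ X Y : V, h X Y = h Y X)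
    (hhξ : ∀ X : V, h X ξ = 0)
    (Rt : V →ₗ[ℝ] V →ₗ[ℝ] V →ₗ[ℝ] V)
    (hRtξ : ∀ X Y : V, Rt X Y ξ = 2 • (η X • Y - η Y • X))
    (P : V →ₗ[ℝ] V →ₗ[ℝ] W →ₗ[ℝ] W)
    (hyp : ∀ X Y Z U : V,
      P X Y (h Z U) - h (Rt X Y Z) U - h Z (Rt X Y U) = 0) :
    h = 0 := by
  ext Z Y
  -- Semiparallelity at `(ξ, Y, Z, ξ)` reduces to `2 • h Z Y = 0`, since `h` kills `ξ`.
  have key := hyp ξ Y Z ξ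
  have hη1 : η ξ = 1 := by rw [hη, hξ]
  rw [hRtξ, hhξ, hhξ, hη1] at key
  simp only [map_zero, map_nsmul, map_sub, map_smul, hhξ, smul_zero, one_smul, sub_zero,
    zero_sub, neg_eq_zero] at key
  rw [← Nat.cast_smul_eq_nsmul ℝ] at key
  exact (smul_eq_zero.mp key).resolve_left (by norm_num)
end

section
/- Let V be a real inner product space, let ξ ∈ V with ⟪ξ, ξ⟫ = 1, and set η(X) := ⟪X, ξ⟫. Let W be a real vector space, h : V → V → W a symmetric ℝ-bilinear map satisfying h(X, ξ) = 0 for all X ∈ V, R : V → V → V → V an ℝ-trilinear map with R(X, Y)ξ = η(X) Y − η(Y) X for all X, Y ∈ V, and P : V → V → (W →ₗ W) an ℝ-bilinear map into linear endomorphisms of W. If for all X, Y, Z, U ∈ V: P(X,Y)(h(Z,U)) − h(R(X,Y)Z, U) − h(Z, R(X,Y)U) = L·(⟪Y,Z⟫ h(X,U) − ⟪X,Z⟫ h(Y,U) + ⟪Y,U⟫ h(X,Z) − ⟪X,U⟫ h(Y,Z)) holds for some L ∈ ℝ, then either h = 0 or L = 1. -/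
open RealInnerProductSpace

/-- Dichotomy underlying Theorems 3.2 and 3.3: if the second fundamental form `h`
of a contact CR-submanifold of a Kenmotsu manifold is Deszcz pseudo parallel with
function `L`, then either `h = 0` (totally geodesic) or `L = 1`. -/
theorem stmt_14 {V W : Type*} [NormedAddCommGroup V] [InnerProductSpace ℝ V]
    [AddCommGroup W] [Module ℝ W]
    (ξ : V) (hξ : ⟪ξ, ξ⟫ = 1) (η : V → ℝ) (hη : ∀ X, η X = ⟪X, ξ⟫)
    (h : V →ₗ[ℝ] V →ₗ[ℝ] W) (hsymm : ∀ X Y : V, h X Y = h Y X)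
    (hhξ : ∀ X : V, h X ξ = 0)
    (R : V →ₗ[ℝ] V →ₗ[ℝ] V →ₗ[ℝ] V)
    (hRξ : ∀ X Y : V, R X Y ξ = η X • Y - η Y • X)
    (P : V →ₗ[ℝ] V →ₗ[ℝ] W →ₗ[ℝ] W)
    (L : ℝ)
    (hyp : ∀ X Y Z U : V,
      P X Y (h Z U) - h (R X Y Z) U - h Z (R X Y U)
        = L • (⟪Y, Z⟫ • h X U - ⟪X, Z⟫ • h Y U + ⟪Y, U⟫ • h X Z
            - ⟪X, U⟫ • h Y Z)) :
    h = 0 ∨ L = 1 := by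
  have hξh : ∀ X : V, h ξ X = 0 := fun X => (hsymm ξ X).trans (hhξ X)
  -- Setting `X = U = ξ` in the pseudo-parallelity condition leaves only `h Z Y = L • h Z Y`.
  have key : ∀ Y Z : V, (L - 1) • h Z Y = 0 := by
    intro Y Z
    have e := hyp ξ Y Z ξ
    simp only [hRξ, hη, hξ, hhξ, hξh, map_sub, map_smul, map_zero, smul_zero, one_smul,
      sub_zero, zero_sub, add_zero, smul_neg, neg_inj] at e
    rw [hsymm Y Z] at e
    rw [sub_smul, one_smul, sub_eq_zero, ← e]
  by_cases hL : L = 1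
  · exact Or.inr hL
  · left
    ext Z Y
    exact (smul_eq_zero.mp (key Y Z)).resolve_left (sub_ne_zero.mpr hL)
end
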